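/- Let d ≥ 2, k ∈ ℝ, l < −1/2 and fix t > 0. Then there is no constant C > 0 such that for all bounded measurable sets A, B ⊆ ℝ^d one has ‖ ∫₀ᵗ ∫_{ℝ^d} (⟨ξ⟩^k / (⟨ξ₁⟩^k ⟨ξ−ξ₁⟩^l)) · cos(s(|ξ|² − |ξ₁|²)) · cos(s|ξ−ξ₁|) · χ_A(ξ₁) χ_B(ξ−ξ₁) dξ₁ ds ‖_{L²_ξ(ℝ^d)} ≤ C(|A| + |B|). (This is the quantitative content of the case l < −1/2 of the C² ill-posedness of the flow map of the Zakharov system at the origin of H^k × H^l × H^{l−1}.) -/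

import Mathlib

/-!
The estimate fails because of a high × high → high interaction which is resonant for the
Schrödinger–wave phase. With `e` a coordinate unit vector and `N` large, take `ξ₁` near `N e` and
`ξ` near `-(N + 1) e`, so that `ξ - ξ₁` is near `-(2N + 1) e` and
`|ξ|² - |ξ₁|² = 2N + 1 = |ξ - ξ₁|` holds exactly at the centres.

All perturbations are taken from the slab `K = {‖x‖ ≤ ρ, |⟨e, x⟩| ≤ ρ / N}`: the small width in the
direction `e` keeps `α = |ξ|² - |ξ₁|²` and `β = |ξ - ξ₁|` within `O(ρ)` of `2N + 1` (`resonance`).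
For `ρ` small in terms of `t`, the summand `cos (s (α - β)) / 2` of `cos (s α) cos (s β)` contributes
at least `t / 4` to the time integral, while the summand `cos (s (α + β)) / 2` oscillates at
frequency about `4N` and costs at most `t / 8` (`time_integral_lower`). The weight is at least
`5 ^ (-|k|) * N ^ (-l)`, since `⟨ξ⟩` and `⟨ξ₁⟩` are comparable (`weight_lower`).

With `A = N e + K` and `B = -(2N + 1) e + 2K`, every `ξ ∈ -(N + 1) e + K` satisfies
`ξ - A ⊆ B`, so the bilinear expression at `ξ` is at least a constant times `N ^ (-l) |K|`
(`main_bound`), and its `L²` norm is at least a constant times `N ^ (-l) |K| ^ (3/2)`. As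
`|A| + |B| = (1 + 2 ^ d) |K|` and `|K| ≥ const / N` (`volume_slab_lower`), the claimed inequality
would bound `N ^ (-l - 1/2)` uniformly in `N`, which is false for `l < -1/2`.
-/

open MeasureTheory

/-- The Japanese bracket `⟨ξ⟩ = √(1+|ξ|²)`. -/
noncomputable def jb {d : ℕ} (ξ : EuclideanSpace ℝ (Fin d)) : ℝ :=
  Real.sqrt (1 + ‖ξ‖ ^ 2)

/-! ### Time integration of the resonant phases -/

/-- The difference frequency is too small to oscillate on `[0, t]`, and the sum frequency is so large
that its contribution is a small fraction of `t`. -/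
lemma time_integral_lower {t α β : ℝ} (ht : 0 < t) (hd : |α - β| ≤ 1 / t) (hs : 4 / t ≤ α + β) :
    t / 8 ≤ ∫ s in (0 : ℝ)..t, Real.cos (s * α) * Real.cos (s * β) := by
  have hpos : 0 < α + β := lt_of_lt_of_le (by positivity) hs
  have hsplit : ∀ s : ℝ, Real.cos (s * α) * Real.cos (s * β)
      = Real.cos (s * (α - β)) / 2 + Real.cos (s * (α + β)) / 2 := by
    intro s
    rw [mul_sub, mul_add, Real.cos_sub, Real.cos_add]; ring
  simp_rw [hsplit]
  rw [intervalIntegral.integral_add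
    (Continuous.intervalIntegrable (by fun_prop) _ _)
    (Continuous.intervalIntegrable (by fun_prop) _ _)]
  have h1 : t / 4 ≤ ∫ s in (0 : ℝ)..t, Real.cos (s * (α - β)) / 2 := by
    have : ∫ s in (0 : ℝ)..t, (1 / 4 : ℝ) = t / 4 := by simp; ring
    rw [← this]
    apply intervalIntegral.integral_mono_on ht.le (by simp)
      (Continuous.intervalIntegrable (by fun_prop) _ _)
    intro s hs'
    have hx : |s * (α - β)| ≤ 1 := by
      rw [abs_mul, abs_of_nonneg hs'.1]
      calc s * |α - β| ≤ t * (1 / t) := by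
            apply mul_le_mul hs'.2 hd (abs_nonneg _) ht.le
        _ = 1 := by field_simp
    have := Real.one_sub_sq_div_two_le_cos (x := s * (α - β))
    have h2 : (s * (α - β)) ^ 2 ≤ 1 := by
      rw [← sq_abs]; exact pow_le_one₀ (abs_nonneg _) hx
    linarith
  have h2 : -(t / 8) ≤ ∫ s in (0 : ℝ)..t, Real.cos (s * (α + β)) / 2 := by
    rw [intervalIntegral.integral_div, intervalIntegral.integral_comp_mul_right _ hpos.ne',
      integral_cos]
    simp only [zero_mul, Real.sin_zero, sub_zero, smul_eq_mul]
    have h3 : (α + β)⁻¹ ≤ t / 4 := by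
      rw [inv_le_comm₀ hpos (by positivity)]; simpa using hs
    have h4 := Real.neg_one_le_sin (t * (α + β))
    have h5 : 0 < (α + β)⁻¹ := by positivity
    nlinarith
  linarith

/-- Integrating in time before space isolates the sign of the oscillating factor, so only a lower
bound for the weight `w` is needed. -/
lemma space_time_lower {E : Type*} [TopologicalSpace E] [MeasurableSpace E] [BorelSpace E]
    [T2Space E] [SecondCountableTopology E] {μ : Measure E} [SFinite μ] [IsFiniteMeasureOnCompacts μ]
    {A : Set E} (hA : IsCompact A) {w α β : E → ℝ} (hw : Continuous w) (hα : Continuous α)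
    (hβ : Continuous β) {t h : ℝ} (ht : 0 < t) (hh : 0 ≤ h) (hwA : ∀ x ∈ A, h ≤ w x)
    (hd : ∀ x ∈ A, |α x - β x| ≤ 1 / t) (hs : ∀ x ∈ A, 4 / t ≤ α x + β x) :
    h * (t / 8) * (μ A).toReal ≤
      ∫ s in (0 : ℝ)..t, ∫ x in A, w x * Real.cos (s * α x) * Real.cos (s * β x) ∂μ := by
  have hI : IntegrableOn (Function.uncurry fun (s : ℝ) (x : E) =>
      w x * Real.cos (s * α x) * Real.cos (s * β x)) (Set.Icc 0 t ×ˢ A) (volume.prod μ) := by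
    apply ContinuousOn.integrableOn_compact (isCompact_Icc.prod hA)
    apply Continuous.continuousOn
    unfold Function.uncurry
    fun_prop
  have hI' : Integrable (Function.uncurry fun (s : ℝ) (x : E) =>
      w x * Real.cos (s * α x) * Real.cos (s * β x))
      ((volume.restrict (Set.uIoc 0 t)).prod (μ.restrict A)) := by
    rw [Measure.prod_restrict, Set.uIoc_of_le ht.le]
    exact hI.mono_set (Set.prod_mono Set.Ioc_subset_Icc_self le_rfl)
  rw [intervalIntegral_integral_swap hI']
  have hconst : ∫ x in A, h * (t / 8) ∂μ = h * (t / 8) * (μ A).toReal := by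
    simp [Measure.real, mul_comm]
  rw [← hconst]
  apply setIntegral_mono_on
  · exact integrableOn_const hA.measure_lt_top.ne
  · have := hI'.integral_prod_right
    rw [Set.uIoc_of_le ht.le] at this
    simp_rw [intervalIntegral.integral_of_le ht.le]
    exact this
  · exact hA.measurableSet
  · intro x hx
    simp_rw [mul_assoc]
    rw [intervalIntegral.integral_const_mul]
    exact mul_le_mul (hwA x hx) (time_integral_lower ht (hd x hx) (hs x hx)) (by positivity)
      (hh.trans (hwA x hx))

/-! ### The frequency slab and the resonance relation -/

/-- The ball of radius `ρ` around `0`, cut down to half-width `ρ / N` in the direction `e`. -/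
def slab {E : Type*} [NormedAddCommGroup E] [InnerProductSpace ℝ E] (e : E) (ρ N : ℝ) : Set E :=
  {x | ‖x‖ ≤ ρ ∧ |inner ℝ e x| ≤ ρ / N}

section
variable {E : Type*} [NormedAddCommGroup E] [InnerProductSpace ℝ E]

lemma isClosed_slab (e : E) (ρ N : ℝ) : IsClosed (slab e ρ N) := by
  have h1 : IsClosed {x : E | ‖x‖ ≤ ρ} := isClosed_le (by fun_prop) (by fun_prop)
  have h2 : IsClosed {x : E | |inner ℝ e x| ≤ ρ / N} := isClosed_le (by fun_prop) (by fun_prop)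
  exact h1.inter h2

lemma slab_subset (e : E) (ρ N : ℝ) : slab e ρ N ⊆ Metric.closedBall 0 ρ := by
  intro x hx; simpa using hx.1

/-- `K - K ⊆ 2K`, as `K` is convex and symmetric. -/
lemma half_sub_mem_slab {e : E} {ρ N : ℝ} {u v : E} (hu : u ∈ slab e ρ N) (hv : v ∈ slab e ρ N) :
    (1 / 2 : ℝ) • (v - u) ∈ slab e ρ N := by
  constructor
  · rw [norm_smul]
    have := norm_sub_le v u
    have h1 := hu.1
    have h2 := hv.1
    norm_num
    linarith
  · rw [inner_smul_right, inner_sub_right]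
    have h1 := abs_le.1 hu.2
    have h2 := abs_le.1 hv.2
    rw [abs_le]
    constructor <;> linarith [h1.1, h1.2, h2.1, h2.2]

lemma shift_norm {e w : E} (he : ‖e‖ = 1) {M r : ℝ} (hM : 0 ≤ M) (hw : ‖w‖ ≤ r) :
    |‖w + M • e‖ - M| ≤ r := by
  have h := abs_norm_sub_norm_le (w + M • e) (M • e)
  rw [norm_smul, he, mul_one, Real.norm_of_nonneg hM, add_sub_cancel_right] at h
  exact h.trans hw

/-- On translates of the slab, both phases stay within `O(ρ)` of `2N + 1`. The term `2 N ⟨e, u⟩` in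
`‖u + N e‖²` is what forces the width `ρ / N` in the direction `e`. -/
lemma resonance {e u v : E} (he : ‖e‖ = 1) {ρ N : ℝ} (hN : 2 ≤ N) (hρ0 : 0 ≤ ρ) (hρ : ρ ≤ 1)
    (hu : u ∈ slab e ρ N) (hv : v ∈ slab e ρ N) :
    |‖v - (N + 1) • e‖ ^ 2 - ‖u + N • e‖ ^ 2 - (2 * N + 1)| ≤ 6 * ρ ∧
    |‖(v - (N + 1) • e) - (u + N • e)‖ - (2 * N + 1)| ≤ 2 * ρ := by
  obtain ⟨hu1, hu2⟩ := hu
  obtain ⟨hv1, hv2⟩ := hv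
  constructor
  · rw [norm_sub_sq_real, norm_add_sq_real, norm_smul, norm_smul, inner_smul_right,
      inner_smul_right, he, real_inner_comm, real_inner_comm e u]
    rw [Real.norm_of_nonneg (by linarith : 0 ≤ N), Real.norm_of_nonneg (by linarith : 0 ≤ N + 1)]
    set p := inner ℝ e u
    set q := inner ℝ e v
    have hp : |N * p| ≤ ρ := by
      rw [abs_mul, abs_of_nonneg (by linarith : 0 ≤ N)]
      calc N * |p| ≤ N * (ρ / N) := by gcongr
        _ = ρ := by field_simp
    have hq : |N * q| ≤ ρ := by
      rw [abs_mul, abs_of_nonneg (by linarith : 0 ≤ N)]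
      calc N * |q| ≤ N * (ρ / N) := by gcongr
        _ = ρ := by field_simp
    have hq' : |q| ≤ ρ / 2 := hv2.trans (by gcongr)
    have h1 : ‖u‖ ^ 2 ≤ ρ := by nlinarith [norm_nonneg u]
    have h2 : ‖v‖ ^ 2 ≤ ρ := by nlinarith [norm_nonneg v]
    rw [abs_le] at *
    have := sq_nonneg ‖u‖
    have := sq_nonneg ‖v‖
    constructor <;> nlinarith
  · have : (v - (N + 1) • e) - (u + N • e) = -((u - v) + (2 * N + 1) • e) := by module
    rw [this, norm_neg]
    exact shift_norm he (by linarith) ((norm_sub_le _ _).trans (by linarith))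
end

/-! ### Size of the weight -/

lemma norm_le_jb {d : ℕ} (x : EuclideanSpace ℝ (Fin d)) : ‖x‖ ≤ jb x :=
  Real.le_sqrt_of_sq_le (by linarith)

lemma jb_le {d : ℕ} (x : EuclideanSpace ℝ (Fin d)) : jb x ≤ 1 + ‖x‖ :=
  Real.sqrt_le_iff.2 ⟨by positivity, by nlinarith [norm_nonneg x]⟩

lemma jb_pos {d : ℕ} (x : EuclideanSpace ℝ (Fin d)) : 0 < jb x := by unfold jb; positivity

lemma continuous_jb {d : ℕ} : Continuous (jb (d := d)) := by unfold jb; fun_prop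

lemma rpow_lower {r k : ℝ} (h1 : 1 / 5 ≤ r) (h2 : r ≤ 5) : (5 : ℝ) ^ (-|k|) ≤ r ^ k := by
  have hr : 0 < r := by linarith
  rw [Real.rpow_def_of_pos (by norm_num), Real.rpow_def_of_pos hr, Real.exp_le_exp]
  have h3 : |Real.log r| ≤ Real.log 5 := by
    rw [abs_le]
    constructor
    · rw [← Real.log_inv]; exact Real.log_le_log (by norm_num) (by linarith)
    · exact Real.log_le_log hr h2
  have h4 : |Real.log r * k| ≤ Real.log 5 * |k| := by rw [abs_mul]; gcongr
  linarith [neg_abs_le (Real.log r * k)]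

lemma weight_lower {d : ℕ} {ξ ξ₁ : EuclideanSpace ℝ (Fin d)} {k l N : ℝ} (hN : 2 ≤ N) (hl : l ≤ 0)
    (h1 : |‖ξ₁‖ - N| ≤ 1) (h2 : |‖ξ‖ - (N + 1)| ≤ 1) (h3 : |‖ξ - ξ₁‖ - (2 * N + 1)| ≤ 2) :
    5 ^ (-|k|) * N ^ (-l) ≤ jb ξ ^ k / (jb ξ₁ ^ k * jb (ξ - ξ₁) ^ l) := by
  rw [abs_le] at h1 h2 h3
  have a1 := norm_le_jb ξ
  have a2 := norm_le_jb ξ₁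
  have a3 := norm_le_jb (ξ - ξ₁)
  have b1 := jb_le ξ
  have b2 := jb_le ξ₁
  have p1 := jb_pos ξ
  have p2 := jb_pos ξ₁
  have p3 := jb_pos (ξ - ξ₁)
  have e : jb ξ ^ k / (jb ξ₁ ^ k * jb (ξ - ξ₁) ^ l)
      = (jb ξ / jb ξ₁) ^ k * jb (ξ - ξ₁) ^ (-l) := by
    rw [Real.div_rpow p1.le p2.le, Real.rpow_neg p3.le, ← div_eq_mul_inv, div_div]
  rw [e]
  apply mul_le_mul
  · apply rpow_lower
    · rw [le_div_iff₀ p2]; linarith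
    · rw [div_le_iff₀ p2]; linarith
  · exact Real.rpow_le_rpow (by linarith) (by linarith) (by linarith)
  · positivity
  · positivity

/-! ### Volume of the slab -/

/-- The slab contains a coordinate box with half-width `ρ / (d N)` in the direction `i₀` and `ρ / d` in
the others. -/
lemma volume_slab_lower {d : ℕ} (i₀ : Fin d) {ρ N : ℝ} (hρ : 0 < ρ) (hN : 1 ≤ N) :
    (2 * ρ / d) ^ d / N ≤ (volume (slab (EuclideanSpace.single i₀ (1 : ℝ)) ρ N)).toReal := by
  have hd : 1 ≤ (d : ℝ) := by
    have := i₀.pos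
    exact_mod_cast this
  set b : Fin d → ℝ := fun i => ρ / d * (if i = i₀ then N⁻¹ else 1) with hb
  have hb0 : ∀ i, 0 ≤ b i := by intro i; simp only [hb]; split_ifs <;> positivity
  have hb1 : ∀ i, b i ≤ ρ / d := by
    intro i
    apply mul_le_of_le_one_right (by positivity)
    split_ifs
    · exact inv_le_one_of_one_le₀ hN
    · exact le_rfl
  have hvol : (volume (Set.Icc (-b) b)).toReal = (2 * ρ / d) ^ d / N := by
    rw [Real.volume_Icc_pi_toReal (fun i => by simpa using hb0 i)]
    have : ∀ i, b i - (-b) i = (2 * ρ / d) * (if i = i₀ then N⁻¹ else 1) := by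
      intro i; simp only [hb, Pi.neg_apply]; ring
    simp_rw [this]
    rw [Finset.prod_mul_distrib]
    simp [div_eq_mul_inv]
  have hmp := EuclideanSpace.volume_preserving_symm_measurableEquiv_toLp (Fin d)
  rw [← hvol, ← hmp.measure_preimage measurableSet_Icc.nullMeasurableSet]
  apply ENNReal.toReal_mono
  · exact ((Metric.isBounded_closedBall.subset (slab_subset _ _ _)).measure_lt_top).ne
  apply measure_mono
  intro x hx
  have hx' : ∀ i, |x i| ≤ b i := fun i => abs_le.2 ⟨hx.1 i, hx.2 i⟩
  constructor
  · refine (sq_le_sq₀ (norm_nonneg _) hρ.le).1 ?_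
    rw [EuclideanSpace.norm_sq_eq]
    calc ∑ i, ‖x i‖ ^ 2 ≤ ∑ _i : Fin d, (ρ / d) ^ 2 := by
          apply Finset.sum_le_sum
          intro i _
          exact pow_le_pow_left₀ (norm_nonneg _) ((hx' i).trans (hb1 i)) 2
      _ = ρ ^ 2 / d := by simp; field_simp
      _ ≤ ρ ^ 2 := div_le_self (by positivity) hd
  · rw [EuclideanSpace.inner_single_left]
    simp only [map_one, one_mul]
    refine (hx' i₀).trans ?_
    simp only [hb, if_true, ← div_eq_mul_inv]
    gcongr
    exact div_le_self hρ.le hd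

/-! ### Lower bound for the bilinear expression -/

/-- The sets `A` and `B` are `N e + K` and `-(2N + 1) e + 2K`, written as preimages; for
`ξ ∈ -(N + 1) e + K` the indicator of `B` equals `1` throughout `A`. -/
lemma main_bound {d : ℕ} {e : EuclideanSpace ℝ (Fin d)} (he : ‖e‖ = 1) {k l t ρ N : ℝ}
    (hl : l ≤ 0) (ht : 0 < t) (hρ0 : 0 ≤ ρ) (hρ : ρ ≤ 1) (hρt : 8 * ρ ≤ 1 / t)
    (hN : 2 ≤ N) (hNt : 4 / t ≤ 4 * N - 6) {ξ : EuclideanSpace ℝ (Fin d)}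
    (hξ : ξ + (N + 1) • e ∈ slab e ρ N) :
    5 ^ (-|k|) * N ^ (-l) * (t / 8) * (volume (slab e ρ N)).toReal ≤
      ∫ s in (0 : ℝ)..t, ∫ ξ₁,
          jb ξ ^ k / (jb ξ₁ ^ k * jb (ξ - ξ₁) ^ l) *
            Real.cos (s * (‖ξ‖ ^ 2 - ‖ξ₁‖ ^ 2)) * Real.cos (s * ‖ξ - ξ₁‖) *
            ((fun x => x - N • e) ⁻¹' slab e ρ N).indicator (fun _ => (1 : ℝ)) ξ₁ *
            ((fun x => (1 / 2 : ℝ) • (x + (2 * N + 1) • e)) ⁻¹' slab e ρ N).indicator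
              (fun _ => (1 : ℝ)) (ξ - ξ₁) := by
  set A : Set (EuclideanSpace ℝ (Fin d)) := (fun x => x - N • e) ⁻¹' slab e ρ N with hA
  have hAvol : volume A = volume (slab e ρ N) :=
    (measurePreserving_sub_right volume (N • e)).measure_preimage
      (isClosed_slab e ρ N).measurableSet.nullMeasurableSet
  have hAc : IsClosed A := (isClosed_slab e ρ N).preimage (by fun_prop)
  have hAk : IsCompact A := by
    apply Metric.isCompact_of_isClosed_isBounded hAc
    apply Metric.isBounded_closedBall (x := N • e) (r := ρ) |>.subset
    intro x hx
    rw [mem_closedBall_iff_norm]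
    exact hx.1
  have hres : ∀ x ∈ A, |‖ξ‖ ^ 2 - ‖x‖ ^ 2 - (2 * N + 1)| ≤ 6 * ρ ∧
      |‖ξ - x‖ - (2 * N + 1)| ≤ 2 * ρ := by
    intro x hx
    have := resonance he hN hρ0 hρ hx hξ
    simpa using this
  have hsimp : ∀ (s : ℝ), (∫ ξ₁, jb ξ ^ k / (jb ξ₁ ^ k * jb (ξ - ξ₁) ^ l) *
            Real.cos (s * (‖ξ‖ ^ 2 - ‖ξ₁‖ ^ 2)) * Real.cos (s * ‖ξ - ξ₁‖) *
            A.indicator (fun _ => (1 : ℝ)) ξ₁ *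
            ((fun x => (1 / 2 : ℝ) • (x + (2 * N + 1) • e)) ⁻¹' slab e ρ N).indicator
              (fun _ => (1 : ℝ)) (ξ - ξ₁)) =
      ∫ ξ₁ in A, jb ξ ^ k / (jb ξ₁ ^ k * jb (ξ - ξ₁) ^ l) *
            Real.cos (s * (‖ξ‖ ^ 2 - ‖ξ₁‖ ^ 2)) * Real.cos (s * ‖ξ - ξ₁‖) := by
    intro s
    rw [← integral_indicator hAc.measurableSet]
    congr 1
    ext x
    by_cases hx : x ∈ A
    · have hmem : ξ - x ∈ (fun x => (1 / 2 : ℝ) • (x + (2 * N + 1) • e)) ⁻¹' slab e ρ N := by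
        have := half_sub_mem_slab hx hξ
        rw [Set.mem_preimage]
        convert this using 1
        module
      simp only [Set.indicator_of_mem hx, Set.indicator_of_mem hmem, mul_one]
    · simp [Set.indicator_of_notMem hx]
  simp_rw [hsimp]
  rw [← hAvol]
  have hjb := continuous_jb (d := d)
  apply space_time_lower hAk _ (by fun_prop) (by fun_prop) ht (by positivity)
  · intro x hx
    apply weight_lower hN hl
    · have := shift_norm he (by linarith : 0 ≤ N) (hx.1.trans hρ)
      simpa using this
    · have := shift_norm (e := -e) (by simpa using he) (by linarith : 0 ≤ N + 1) (hξ.1.trans hρ)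
      simpa using this
    · exact (hres x hx).2.trans (by linarith)
  · intro x hx
    obtain ⟨h1, h2⟩ := hres x hx
    rw [abs_le] at *
    constructor <;> linarith
  · intro x hx
    obtain ⟨h1, h2⟩ := hres x hx
    rw [abs_le] at *
    linarith
  · apply Continuous.div₀ continuous_const
    · apply Continuous.mul
      · exact hjb.rpow_const (fun x => Or.inl (jb_pos x).ne')
      · exact (hjb.comp (by fun_prop)).rpow_const (fun x => Or.inl (jb_pos _).ne')
    · intro x
      have := jb_pos x
      have := jb_pos (ξ - x)
      positivity

/-- A function which is at least `h κ` on a set of measure `κ` has `L²` norm at least `h κ ^ (3/2)`. -/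
lemma l2_consequence {X : Type*} [MeasurableSpace X] {μ : Measure X} {F : X → ℝ} {R : Set X}
    (hR : MeasurableSet R) {h κ M : ℝ} (hh : 0 ≤ h) (hκ : 0 < κ) (hRκ : μ R = ENNReal.ofReal κ)
    (hF : ∀ x ∈ R, h * κ ≤ F x) (hM : 0 ≤ M) (hle : eLpNorm F 2 μ ≤ ENNReal.ofReal (M * κ)) :
    h * κ ^ (1 / 2 : ℝ) ≤ M := by
  have h1 : eLpNorm (R.indicator fun _ => h * κ) 2 μ ≤ eLpNorm F 2 μ := by
    apply eLpNorm_mono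
    intro x
    by_cases hx : x ∈ R
    · rw [Set.indicator_of_mem hx, Real.norm_of_nonneg (by positivity)]
      exact (hF x hx).trans (Real.le_norm_self _)
    · simp [Set.indicator_of_notMem hx]
  rw [eLpNorm_indicator_const hR (by norm_num) (by norm_num), hRκ,
    Real.enorm_of_nonneg (by positivity), ENNReal.ofReal_rpow_of_pos hκ,
    ← ENNReal.ofReal_mul (by positivity)] at h1
  have h2 := (ENNReal.ofReal_le_ofReal_iff (by positivity)).1 (h1.trans hle)
  simp only [ENNReal.toReal_ofNat] at h2
  have : h * κ ^ (1 / 2 : ℝ) * κ ≤ M * κ := by linarith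
  exact le_of_mul_le_mul_right this hκ

/-- Case `l < −1/2` of the `C²` ill-posedness of the flow map of the Zakharov
system: the bilinear estimate coming from the second Gâteaux derivative of the
Schrödinger component fails. -/
theorem flow_map_not_C2_low_l
    (d : ℕ) (hd : 2 ≤ d) (k l : ℝ) (hl : l < -(1 / 2)) (t : ℝ) (ht : 0 < t) :
    ¬ ∃ C > 0, ∀ A B : Set (EuclideanSpace ℝ (Fin d)),
      MeasurableSet A → MeasurableSet B →
      Bornology.IsBounded A → Bornology.IsBounded B →
      eLpNorm
        (fun ξ => ∫ s in (0 : ℝ)..t, ∫ ξ₁,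
          jb ξ ^ k / (jb ξ₁ ^ k * jb (ξ - ξ₁) ^ l) *
            Real.cos (s * (‖ξ‖ ^ 2 - ‖ξ₁‖ ^ 2)) * Real.cos (s * ‖ξ - ξ₁‖) *
            A.indicator (fun _ => (1 : ℝ)) ξ₁ *
            B.indicator (fun _ => (1 : ℝ)) (ξ - ξ₁)) 2 volume ≤
      ENNReal.ofReal (C * ((volume A).toReal + (volume B).toReal)) := by
  rintro ⟨C, hC, H⟩
  have hd0 : 0 < (d : ℝ) := by exact_mod_cast (by lia : 0 < d)
  set i₀ : Fin d := ⟨0, by lia⟩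
  set e : EuclideanSpace ℝ (Fin d) := EuclideanSpace.single i₀ 1 with hedef
  have he : ‖e‖ = 1 := by simp [hedef]
  -- The radius is chosen so that the two phases differ by at most `8 ρ ≤ 1 / t`.
  set ρ : ℝ := min 1 (1 / (8 * t)) with hρdef
  have hρ0 : 0 < ρ := by positivity
  have hρ1 : ρ ≤ 1 := min_le_left _ _
  have hρt : 8 * ρ ≤ 1 / t := by
    have : ρ ≤ 1 / (8 * t) := min_le_right _ _
    calc 8 * ρ ≤ 8 * (1 / (8 * t)) := by gcongr
      _ = 1 / t := by field_simp
  set c₀ : ℝ := 2 * ρ / d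
  have hc₀ : 0 < c₀ := by positivity
  set M : ℝ := C * (1 + 2 ^ d)
  have key : ∀ N : ℝ, 2 ≤ N → 4 / t ≤ 4 * N - 6 →
      5 ^ (-|k|) * (t / 8) * (c₀ ^ d) ^ (1 / 2 : ℝ) * N ^ (-l - 1 / 2) ≤ M := by
    intro N hN hNt
    have hN0 : 0 < N := by linarith
    set K := slab e ρ N
    have hKm : MeasurableSet K := (isClosed_slab e ρ N).measurableSet
    have hKb : Bornology.IsBounded K := Metric.isBounded_closedBall.subset (slab_subset _ _ _)
    set κ : ℝ := (volume K).toReal with hκdef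
    have hκ : c₀ ^ d / N ≤ κ := volume_slab_lower i₀ hρ0 (by linarith)
    have hκ0 : 0 < κ := lt_of_lt_of_le (by positivity) hκ
    have hKκ : volume K = ENNReal.ofReal κ := (ENNReal.ofReal_toReal hKb.measure_lt_top.ne).symm
    have hA : volume ((fun x => x - N • e) ⁻¹' K) = volume K :=
      (measurePreserving_sub_right volume (N • e)).measure_preimage hKm.nullMeasurableSet
    have hR : volume ((fun x => x + (N + 1) • e) ⁻¹' K) = volume K :=
      (measurePreserving_add_right volume _).measure_preimage hKm.nullMeasurableSet
    have hB : volume ((fun x => (1 / 2 : ℝ) • (x + (2 * N + 1) • e)) ⁻¹' K)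
        = ENNReal.ofReal (2 ^ d) * volume K := by
      have h1 : (fun x => (1 / 2 : ℝ) • (x + (2 * N + 1) • e)) ⁻¹' K
          = (fun x => x + (2 * N + 1) • e) ⁻¹' ((fun x => (1 / 2 : ℝ) • x) ⁻¹' K) := rfl
      rw [h1, (measurePreserving_add_right volume _).measure_preimage
        ((measurable_const_smul (1 / 2 : ℝ)) hKm).nullMeasurableSet,
        Measure.addHaar_preimage_smul _ (by norm_num)]
      simp
    have hbd := H ((fun x => x - N • e) ⁻¹' K)
      ((fun x => (1 / 2 : ℝ) • (x + (2 * N + 1) • e)) ⁻¹' K)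
      (hKm.preimage (by fun_prop)) (hKm.preimage (by fun_prop)) (by
        apply Metric.isBounded_closedBall (x := N • e) (r := ρ) |>.subset
        intro x hx
        rw [mem_closedBall_iff_norm]
        exact hx.1) (by
        apply Metric.isBounded_closedBall (x := -((2 * N + 1) • e)) (r := 2 * ρ) |>.subset
        intro x hx
        have := hx.1
        rw [norm_smul] at this
        rw [mem_closedBall_iff_norm, sub_neg_eq_add]
        norm_num at this
        linarith)
    have hrhs : C * ((volume ((fun x => x - N • e) ⁻¹' K)).toReal +
        (volume ((fun x => (1 / 2 : ℝ) • (x + (2 * N + 1) • e)) ⁻¹' K)).toReal) = M * κ := by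
      rw [hA, hB, ENNReal.toReal_mul, ENNReal.toReal_ofReal (by positivity)]
      simp only [M, κ]
      ring
    rw [hrhs] at hbd
    have hfin := l2_consequence (R := (fun x => x + (N + 1) • e) ⁻¹' K)
      (hKm.preimage (by fun_prop)) (h := 5 ^ (-|k|) * N ^ (-l) * (t / 8)) (by positivity) hκ0
      (hR.trans hKκ) (fun ξ hξ => main_bound he (by linarith) ht hρ0.le hρ1 hρt hN hNt hξ)
      (by positivity) hbd
    refine le_trans ?_ hfin
    calc 5 ^ (-|k|) * (t / 8) * (c₀ ^ d) ^ (1 / 2 : ℝ) * N ^ (-l - 1 / 2)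
        = 5 ^ (-|k|) * N ^ (-l) * (t / 8) * (c₀ ^ d / N) ^ (1 / 2 : ℝ) := by
          rw [Real.rpow_sub hN0, Real.div_rpow (by positivity) hN0.le]
          ring
      _ ≤ _ := by gcongr
  have hlim : Filter.Tendsto (fun N : ℝ =>
      5 ^ (-|k|) * (t / 8) * (c₀ ^ d) ^ (1 / 2 : ℝ) * N ^ (-l - 1 / 2))
      Filter.atTop Filter.atTop :=
    (tendsto_rpow_atTop (by linarith)).const_mul_atTop (by positivity)
  obtain ⟨N, hN1, hN2, hN3⟩ := ((hlim.eventually_gt_atTop M).and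
    ((Filter.eventually_ge_atTop 2).and (Filter.eventually_ge_atTop (2 + 1 / t)))).exists
  have : 4 / t = 4 * (1 / t) := by ring
  exact absurd (key N hN2 (by linarith)) (not_le.2 hN1)
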